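/- arXiv:2007.10676 — 9 statements merged into one kernel-verified Lean document; each statement's English description precedes it below -/
import Mathlib

section
/- Let k ≥ 2 be an integer, τ a real number, and a, b > 0. Define the doubly infinite sequence u : ℤ → ℝ by u_n = 1 if n is even, u_n = a if n ≡ 3 (mod 4), and u_n = b if n ≡ 1 (mod 4). Then u satisfies the recurrence u_{i+1} = (u_{-1} + u_1 − τ)·u_i^k + τ·u_i − u_{i−1} for all i ∈ ℤ if and only if the pair (a, b) satisfies the system (a + b − τ)·b^k + τ·b − 2 = 0 and (a + b − τ)·a^k + τ·a − 2 = 0. -/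
/-- For `k ≥ 2`, `τ : ℝ`, `a b > 0`, the period-4 sequence
`u_n = 1` (n even), `u_n = a` (n ≡ 3 mod 4), `u_n = b` (n ≡ 1 mod 4)
satisfies the recurrence `u_{i+1} = (u_{-1} + u_1 − τ) u_i^k + τ u_i − u_{i−1}`
for all `i ∈ ℤ` iff `(a, b)` solves the system (ab). -/
theorem stmt0 (k : ℕ) (hk : 2 ≤ k) (τ a b : ℝ) (ha : 0 < a) (hb : 0 < b)
    (u : ℤ → ℝ)
    (hu : ∀ n : ℤ, u n = if n % 2 = 0 then 1 else if n % 4 = 3 then a else b) :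
    (∀ i : ℤ, u (i + 1) = (u (-1) + u 1 - τ) * (u i) ^ k + τ * u i - u (i - 1)) ↔
      ((a + b - τ) * b ^ k + τ * b - 2 = 0 ∧
        (a + b - τ) * a ^ k + τ * a - 2 = 0) := by
  have he : ∀ n : ℤ, n % 2 = 0 → u n = 1 := fun n h => by rw [hu, if_pos h]
  have h3 : ∀ n : ℤ, n % 4 = 3 → u n = a := fun n h => by
    rw [hu, if_neg (by omega), if_pos h]
  have h1 : ∀ n : ℤ, n % 4 = 1 → u n = b := fun n h => by
    rw [hu, if_neg (by omega), if_neg (by omega)]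
  rw [h3 (-1) (by norm_num), h1 1 (by norm_num)]
  constructor
  · intro h
    have e1 := h 1
    have e3 := h 3
    rw [he (1 + 1) (by norm_num), he (1 - 1) (by norm_num), h1 1 (by norm_num)] at e1
    rw [he (3 + 1) (by norm_num), he (3 - 1) (by norm_num), h3 3 (by norm_num)] at e3
    constructor <;> linarith
  · rintro ⟨hB, hA⟩ i
    have hi : i % 4 = 0 ∨ i % 4 = 1 ∨ i % 4 = 2 ∨ i % 4 = 3 := by omega
    rcases hi with hi | hi | hi | hi
    · rw [h1 (i + 1) (by omega), h3 (i - 1) (by omega), he i (by omega), one_pow]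
      ring
    · rw [he (i + 1) (by omega), he (i - 1) (by omega), h1 i hi]
      linarith
    · rw [h3 (i + 1) (by omega), h1 (i - 1) (by omega), he i (by omega), one_pow]
      ring
    · rw [he (i + 1) (by omega), he (i - 1) (by omega), h3 i hi]
      linarith
end

section
/- Let k ≥ 2 be an integer, 0 < θ < 1, and set τ = θ + θ^{-1}. Let u : ℤ → ℝ be a sequence of positive reals with u_0 = 1 satisfying u_{i−1} + u_{i+1} − τ·u_i = (u_{−1} + u_1 − τ)·u_i^k for all i ∈ ℤ, and assume both series Σ_{j∈ℤ} θ^{|j|}·u_j^k and Σ_{j∈ℤ} θ^{|j|}·u_j converge. Then (u_{−1} + u_1 − τ)·Σ_{j∈ℤ} θ^{|j|}·u_j^k = θ − θ^{-1}; equivalently, writing l_0 + r_0 = Σ_{j∈ℤ, j≠0} θ^{|j|}·u_j^k, one has 1 + l_0 + r_0 = (θ − θ^{-1})/(u_{−1} + u_1 − τ). -/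
open scoped BigOperators

/-- For `k ≥ 2`, `0 < θ < 1`, `τ = θ + θ⁻¹`, and a positive
sequence `u` with `u 0 = 1` satisfying the three-term relation, if
`Σ_{j∈ℤ} θ^{|j|} u_j^k` and `Σ_{j∈ℤ} θ^{|j|} u_j` converge, then
`(u_{−1} + u_1 − τ) Σ_{j∈ℤ} θ^{|j|} u_j^k = θ − θ⁻¹`; equivalently,
`1 + l_0 + r_0 = (θ − θ⁻¹)/(u_{−1} + u_1 − τ)`. -/
theorem stmt2 (k : ℕ) (hk : 2 ≤ k) (θ : ℝ) (hθ0 : 0 < θ) (hθ1 : θ < 1)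
    (τ : ℝ) (hτ : τ = θ + θ⁻¹)
    (u : ℤ → ℝ) (hupos : ∀ i : ℤ, 0 < u i) (hu0 : u 0 = 1)
    (hrec : ∀ i : ℤ,
      u (i - 1) + u (i + 1) - τ * u i = (u (-1) + u 1 - τ) * u i ^ k)
    (hsum1 : Summable (fun j : ℤ => θ ^ j.natAbs * u j ^ k))
    (hsum2 : Summable (fun j : ℤ => θ ^ j.natAbs * u j)) :
    (u (-1) + u 1 - τ) * (∑' j : ℤ, θ ^ j.natAbs * u j ^ k) = θ - θ⁻¹ ∧
      1 + (∑' j : {j : ℤ // j ≠ 0}, θ ^ (j : ℤ).natAbs * u (j : ℤ) ^ k) =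
        (θ - θ⁻¹) / (u (-1) + u 1 - τ) := by
  have hne : θ ≠ 0 := hθ0.ne'
  have hb : ∀ a b : ℤ, a.natAbs ≤ b.natAbs + 1 → θ ^ b.natAbs ≤ θ⁻¹ * θ ^ a.natAbs := by
    intro a b h
    have h1 : θ ^ (b.natAbs + 1) ≤ θ ^ a.natAbs :=
      pow_le_pow_of_le_one hθ0.le hθ1.le h
    calc θ ^ b.natAbs = θ⁻¹ * θ ^ (b.natAbs + 1) := by rw [pow_succ]; field_simp
      _ ≤ _ := mul_le_mul_of_nonneg_left h1 (inv_pos.2 hθ0).le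
  have hS : ∀ e : ℤ, e.natAbs ≤ 1 →
      Summable (fun j : ℤ => θ ^ (j + e).natAbs * u j) := by
    intro e he
    refine Summable.of_nonneg_of_le
      (fun j => mul_nonneg (pow_nonneg hθ0.le _) (hupos j).le) (fun j => ?_)
      (hsum2.mul_left θ⁻¹)
    rw [← mul_assoc]
    exact mul_le_mul_of_nonneg_right (hb j (j + e) (by omega)) (hupos j).le
  have hP := hS 1 (by decide)
  have hM := hS (-1) (by decide)
  have hP' : HasSum (fun j : ℤ => θ ^ j.natAbs * u (j - 1))
      (∑' j : ℤ, θ ^ (j + 1).natAbs * u j) := by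
    rw [← (Equiv.addRight (1 : ℤ)).hasSum_iff]
    convert hP.hasSum using 2 with j
    simp
  have hM' : HasSum (fun j : ℤ => θ ^ j.natAbs * u (j + 1))
      (∑' j : ℤ, θ ^ (j + -1).natAbs * u j) := by
    rw [← (Equiv.addRight (-1 : ℤ)).hasSum_iff]
    convert hM.hasSum using 2 with j
    simp
  have hL := (hP'.add hM').sub (hsum2.hasSum.mul_left τ)
  have hR := (hP.hasSum.add hM.hasSum).sub (hsum2.hasSum.mul_left τ)
  have hz : HasSum (fun j : ℤ => θ ^ (j + 1).natAbs * u j + θ ^ (j + -1).natAbs * u j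
      - τ * (θ ^ j.natAbs * u j)) (θ - θ⁻¹) := by
    convert hasSum_single (0 : ℤ) ?_ using 1
    · simp [hu0, hτ]
    · intro j hj
      have key : ∀ n : ℕ, θ ^ (n + 2) + θ ^ n - τ * θ ^ (n + 1) = 0 := by
        intro n
        rw [hτ, pow_succ, pow_succ]
        field_simp
        ring
      rcases lt_or_gt_of_ne hj with h | h
      · obtain ⟨n, hn⟩ : ∃ n : ℕ, j.natAbs = n + 1 := ⟨j.natAbs - 1, by omega⟩
        rw [hn, show (j + 1).natAbs = n by omega, show (j + -1).natAbs = n + 2 by omega]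
        linear_combination u j * key n
      · obtain ⟨n, hn⟩ : ∃ n : ℕ, j.natAbs = n + 1 := ⟨j.natAbs - 1, by omega⟩
        rw [hn, show (j + 1).natAbs = n + 2 by omega, show (j + -1).natAbs = n by omega]
        linear_combination u j * key n
  have hC := hsum1.hasSum.mul_left (u (-1) + u 1 - τ)
  have hfe : (fun j : ℤ => (u (-1) + u 1 - τ) * (θ ^ j.natAbs * u j ^ k)) =
      fun j : ℤ => θ ^ j.natAbs * u (j - 1) + θ ^ j.natAbs * u (j + 1)
        - τ * (θ ^ j.natAbs * u j) := by
    funext j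
    linear_combination (-θ ^ j.natAbs) * hrec j
  rw [hfe] at hC
  have main : (u (-1) + u 1 - τ) * (∑' j : ℤ, θ ^ j.natAbs * u j ^ k) = θ - θ⁻¹ :=
    (hC.unique hL).trans (hR.unique hz)
  refine ⟨main, ?_⟩
  have hlt : θ - θ⁻¹ < 0 := by
    have := (one_lt_inv₀ hθ0).2 hθ1
    linarith
  have hc : u (-1) + u 1 - τ ≠ 0 := by
    intro h
    rw [h, zero_mul] at main
    linarith
  have hsplit := hsum1.tsum_subtype_add_tsum_subtype_compl {j : ℤ | j ≠ 0}
  have h0 : (∑' j : ↑({j : ℤ | j ≠ 0}ᶜ), θ ^ (j : ℤ).natAbs * u (j : ℤ) ^ k) = 1 := by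
    have : ({j : ℤ | j ≠ 0}ᶜ) = {0} := by ext; simp
    rw [this, tsum_singleton (0 : ℤ) (fun j : ℤ => θ ^ j.natAbs * u j ^ k)]
    simp [hu0]
  rw [h0] at hsplit
  rw [eq_div_iff hc, ← main, ← hsplit]
  change (1 + ∑' j : {j : ℤ // j ≠ 0}, θ ^ (j : ℤ).natAbs * u (j : ℤ) ^ k) * _ =
    _ * ((∑' j : {j : ℤ // j ≠ 0}, θ ^ (j : ℤ).natAbs * u (j : ℤ) ^ k) + 1)
  ring
end

section
/- Let k ≥ 2 be an integer and τ a real number. If a, b > 0 with a ≠ b satisfy the system (a + b − τ)·b^k + τ·b − 2 = 0 and (a + b − τ)·a^k + τ·a − 2 = 0, then with x = a/b one has (x^{k−1} + x^{k−2} + ⋯ + x^2 + x)·(τ·b − 2) − 2 = 0. -/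
open scoped BigOperators

theorem aux_geom (x : ℝ) (n : ℕ) :
    (∑ j ∈ Finset.Icc 1 n, x ^ j) * (x - 1) = x ^ (n + 1) - x := by
  induction n with
  | zero => simp
  | succ m ih =>
    rw [Finset.sum_Icc_succ_top (by omega), add_mul, ih]
    ring

/-- If `a ≠ b` are positive solutions of system (ab), then with
`x = a/b` one has `(x^{k−1} + ⋯ + x)(τ b − 2) − 2 = 0`. -/
theorem stmt5 (k : ℕ) (hk : 2 ≤ k) (τ a b : ℝ) (ha : 0 < a) (hb : 0 < b)
    (hab : a ≠ b)
    (h1 : (a + b - τ) * b ^ k + τ * b - 2 = 0)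
    (h2 : (a + b - τ) * a ^ k + τ * a - 2 = 0) :
    (∑ j ∈ Finset.Icc 1 (k - 1), (a / b) ^ j) * (τ * b - 2) - 2 = 0 := by
  have hg := aux_geom (a / b) (k - 1)
  rw [show k - 1 + 1 = k by omega] at hg
  have hx : a / b - 1 ≠ 0 := by
    intro h
    apply hab
    have h' : a / b = 1 := by linarith
    rwa [div_eq_one_iff_eq hb.ne'] at h'
  have hA : a = a / b * b := by field_simp
  have hAk : a ^ k = (a / b) ^ k * b ^ k := by rw [← mul_pow, ← hA]
  have hA' : τ * a = τ * b * (a / b) := by field_simp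
  rw [hAk, hA'] at h2
  generalize (∑ j ∈ Finset.Icc 1 (k - 1), (a / b) ^ j) = S at *
  apply mul_right_cancel₀ hx
  linear_combination (τ * b - 2) * hg + (a / b) ^ k * h1 - h2
end

section
/- Let k ≥ 2 be an integer, τ a real number, and b > 0 with τ·b − 2 ≤ 0. Then there is no a > 0 with a ≠ b such that (a, b) satisfies the system (a + b − τ)·b^k + τ·b − 2 = 0 and (a + b − τ)·a^k + τ·a − 2 = 0. -/
/-- If `b > 0` and `τ b − 2 ≤ 0`, there is no `a > 0`, `a ≠ b`,
such that `(a, b)` solves system (ab). -/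
theorem stmt6 (k : ℕ) (hk : 2 ≤ k) (τ b : ℝ) (hb : 0 < b)
    (hτb : τ * b - 2 ≤ 0) :
    ¬ ∃ a : ℝ, 0 < a ∧ a ≠ b ∧
      (a + b - τ) * b ^ k + τ * b - 2 = 0 ∧
      (a + b - τ) * a ^ k + τ * a - 2 = 0 := by
  rintro ⟨a, ha, hne, h1, h2⟩
  have hc : 0 ≤ a + b - τ := by
    by_contra! h
    have := mul_neg_of_neg_of_pos h (pow_pos hb k)
    linarith
  obtain ⟨n, rfl⟩ : ∃ n, k = n + 1 := ⟨k - 1, by omega⟩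
  generalize a + b - τ = c at *
  have key : (a * b * c) * (a ^ n - b ^ n) = 2 * (b - a) := by
    rw [pow_succ] at h1 h2
    linear_combination b * h2 - a * h1
  have hp : 0 ≤ a * b * c := by positivity
  rcases lt_or_gt_of_ne hne with h | h
  · have h3 : a ^ n ≤ b ^ n := pow_le_pow_left₀ ha.le h.le n
    nlinarith [mul_nonneg hp (sub_nonneg.2 h3)]
  · have h3 : b ^ n ≤ a ^ n := pow_le_pow_left₀ hb.le h.le n
    nlinarith [mul_nonneg hp (sub_nonneg.2 h3)]
end

section
/- Let k ≥ 2 be an integer and τ a real number, and let b > 0 satisfy τ·b = 2 + 2/(k − 1). Then there is no a > 0 with a ≠ b such that (a, b) satisfies the system (a + b − τ)·b^k + τ·b − 2 = 0 and (a + b − τ)·a^k + τ·a − 2 = 0. -/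
/-- If `b > 0` satisfies `τ b = 2 + 2/(k − 1)`, there is no
`a > 0`, `a ≠ b`, such that `(a, b)` solves system (ab). -/
theorem stmt8 (k : ℕ) (hk : 2 ≤ k) (τ b : ℝ) (hb : 0 < b)
    (hτb : τ * b = 2 + 2 / ((k : ℝ) - 1)) :
    ¬ ∃ a : ℝ, 0 < a ∧ a ≠ b ∧
      (a + b - τ) * b ^ k + τ * b - 2 = 0 ∧
      (a + b - τ) * a ^ k + τ * a - 2 = 0 := by
  rintro ⟨a, ha, hab, h1, h2⟩
  have hk' : (2 : ℝ) ≤ k := by exact_mod_cast hk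
  have hk1 : (0 : ℝ) < (k : ℝ) - 1 := by linarith
  obtain ⟨x, rfl⟩ : ∃ x, a = x * b := ⟨a / b, by field_simp⟩
  have hx : 0 < x := pos_of_mul_pos_left ha hb.le
  have hx1 : x ≠ 1 := by
    rintro rfl
    exact hab (one_mul b)
  have hB := one_add_mul_self_lt_rpow_one_add (s := x - 1) (p := (k : ℝ))
    (by linarith) (sub_ne_zero.mpr hx1) (by linarith)
  rw [show 1 + (x - 1) = x by ring, Real.rpow_natCast] at hB
  rw [mul_pow] at h2
  have e : x ^ k * (2 - τ * b) = 2 - x * (τ * b) := by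
    linear_combination h2 - x ^ k * h1
  rw [hτb] at e
  have e2 : x ^ k = 1 + k * (x - 1) := by
    field_simp at e
    linarith
  linarith
end

section
/- Let k ≥ 2 be an integer and τ > 2 a real number, and let Q(a) = 2·a^k + (2 − τ)·(a^{k−1} + a^{k−2} + ⋯ + a) + 2. Then Q has at most two roots in (0, ∞). -/
open scoped BigOperators

lemma aux_reflect (k : ℕ) (a : ℝ) :
    ∑ j ∈ Finset.Icc 1 (k - 1), a ^ (k - j) = ∑ j ∈ Finset.Icc 1 (k - 1), a ^ j := by
  refine Finset.sum_bij' (fun j _ => k - j) (fun j _ => k - j) ?_ ?_ ?_ ?_ ?_ <;>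
    intro j hj <;> simp only [Finset.mem_Icc] at * <;> omega

lemma aux_diff (k : ℕ) (a b : ℝ) :
    2 * ((b ^ k + 1) * (∑ j ∈ Finset.Icc 1 (k - 1), a ^ j)
      - (a ^ k + 1) * (∑ j ∈ Finset.Icc 1 (k - 1), b ^ j)) =
    ∑ j ∈ Finset.Icc 1 (k - 1), ((b ^ (k - j) - a ^ (k - j)) * ((a * b) ^ j - 1)
      + (b ^ j - a ^ j) * ((a * b) ^ (k - j) - 1)) := by
  have h : ∀ c : ℝ, 2 * ∑ j ∈ Finset.Icc 1 (k - 1), c ^ j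
      = ∑ j ∈ Finset.Icc 1 (k - 1), (c ^ j + c ^ (k - j)) := by
    intro c
    rw [Finset.sum_add_distrib, aux_reflect]; ring
  have e : 2 * ((b ^ k + 1) * (∑ j ∈ Finset.Icc 1 (k - 1), a ^ j)
      - (a ^ k + 1) * (∑ j ∈ Finset.Icc 1 (k - 1), b ^ j))
      = (b ^ k + 1) * (2 * ∑ j ∈ Finset.Icc 1 (k - 1), a ^ j)
      - (a ^ k + 1) * (2 * ∑ j ∈ Finset.Icc 1 (k - 1), b ^ j) := by ring
  rw [e, h, h, Finset.mul_sum, Finset.mul_sum, ← Finset.sum_sub_distrib]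
  refine Finset.sum_congr rfl fun j hj => ?_
  simp only [Finset.mem_Icc] at hj
  obtain ⟨m, rfl⟩ : ∃ m, k = j + m := ⟨k - j, by omega⟩
  rw [Nat.add_sub_cancel_left]
  ring

lemma aux_prod (k : ℕ) (hk : 2 ≤ k) (a b : ℝ) (ha : 0 < a) (hab : a < b)
    (h : (b ^ k + 1) * (∑ j ∈ Finset.Icc 1 (k - 1), a ^ j)
      - (a ^ k + 1) * (∑ j ∈ Finset.Icc 1 (k - 1), b ^ j) = 0) : a * b = 1 := by
  have hd := aux_diff k a b
  rw [h, mul_zero] at hd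
  have hne : (Finset.Icc 1 (k - 1)).Nonempty := ⟨1, by simp; omega⟩
  have hp : ∀ n : ℕ, n ≠ 0 → 0 < b ^ n - a ^ n := fun n hn =>
    sub_pos.2 (pow_lt_pow_left₀ hab ha.le hn)
  have hab0 : 0 < a * b := mul_pos ha (ha.trans hab)
  rcases lt_trichotomy (a * b) 1 with h1 | h1 | h1
  · exfalso
    refine (Finset.sum_lt_sum_of_nonempty (g := fun _ => (0 : ℝ)) hne fun j hj => ?_).ne
      (by rw [← hd]; simp)
    simp only [Finset.mem_Icc] at hj
    have hn : ∀ n : ℕ, n ≠ 0 → (a * b) ^ n - 1 < 0 := fun n hn =>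
      sub_neg.2 (pow_lt_one₀ hab0.le h1 hn)
    exact add_neg (mul_neg_of_pos_of_neg (hp _ (by omega)) (hn _ (by omega)))
      (mul_neg_of_pos_of_neg (hp _ (by omega)) (hn _ (by omega)))
  · exact h1
  · exfalso
    refine (Finset.sum_pos (fun j hj => ?_) hne).ne hd
    simp only [Finset.mem_Icc] at hj
    have hn : ∀ n : ℕ, n ≠ 0 → 0 < (a * b) ^ n - 1 := fun n hn =>
      sub_pos.2 (one_lt_pow₀ h1 hn)
    exact add_pos (mul_pos (hp _ (by omega)) (hn _ (by omega)))
      (mul_pos (hp _ (by omega)) (hn _ (by omega)))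

/-- For `τ > 2`, `Q(a) = 2 a^k + (2 − τ)(a^{k−1} + ⋯ + a) + 2`
has at most two roots in `(0, ∞)`. -/
theorem stmt13 (k : ℕ) (hk : 2 ≤ k) (τ : ℝ) (hτ : 2 < τ) (Q : ℝ → ℝ)
    (hQ : ∀ a : ℝ, Q a = 2 * a ^ k + (2 - τ) * (∑ j ∈ Finset.Icc 1 (k - 1), a ^ j) + 2) :
    {a : ℝ | 0 < a ∧ Q a = 0}.encard ≤ 2 := by
  have key : ∀ a b : ℝ, 0 < a → 0 < b → Q a = 0 → Q b = 0 → a ≠ b → a * b = 1 := by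
    intro a b ha hb hqa hqb hne
    wlog hlt : a < b generalizing a b
    · rw [mul_comm]
      exact this b a hb ha hqb hqa hne.symm (lt_of_le_of_ne (not_lt.1 hlt) hne.symm)
    refine aux_prod k hk a b ha hlt ?_
    rw [hQ] at hqa hqb
    linear_combination (∑ j ∈ Finset.Icc 1 (k - 1), a ^ j) / 2 * hqb
      - (∑ j ∈ Finset.Icc 1 (k - 1), b ^ j) / 2 * hqa
  set S := {a : ℝ | 0 < a ∧ Q a = 0} with hS
  rcases S.eq_empty_or_nonempty with h0 | ⟨a, ha⟩
  · simp [h0]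
  · have hsub : S ⊆ {a, a⁻¹} := by
      intro b hb
      by_cases hab : a = b
      · simp [hab]
      · right
        exact eq_inv_of_mul_eq_one_right (key a b ha.1 hb.1 ha.2 hb.2 hab)
    refine (Set.encard_le_encard hsub).trans ((Set.encard_insert_le _ _).trans ?_)
    rw [Set.encard_singleton]
    exact le_of_eq one_add_one_eq_two
end

section
/- Let k ≥ 2 be an integer and τ > 2 a real number, let Q(a) = 2·a^k + (2 − τ)·(a^{k−1} + a^{k−2} + ⋯ + a) + 2, and let a_c > 0 be the unique positive root of Q′. Then: if Q(a_c) < 0, Q has exactly two roots in (0, ∞); if Q(a_c) = 0, Q has exactly one root in (0, ∞); and if Q(a_c) > 0, Q has no root in (0, ∞). -/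
open scoped BigOperators

/-- For `τ > 2`, with `Q(a) = 2 a^k + (2 − τ)(a^{k−1} + ⋯ + a) + 2`,
`Q′` its derivative and `a_c` the unique positive root of `Q′`: if `Q(a_c) < 0`
then `Q` has exactly two positive roots; if `Q(a_c) = 0`, exactly one; if
`Q(a_c) > 0`, none. -/
theorem stmt15 (k : ℕ) (hk : 2 ≤ k) (τ : ℝ) (hτ : 2 < τ) (Q Q' : ℝ → ℝ)
    (hQ : ∀ a : ℝ, Q a = 2 * a ^ k + (2 - τ) * (∑ j ∈ Finset.Icc 1 (k - 1), a ^ j) + 2)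
    (hQ' : ∀ a : ℝ, HasDerivAt Q (Q' a) a)
    (ac : ℝ) (hac : 0 < ac) (hroot : Q' ac = 0)
    (huniq : ∀ x : ℝ, 0 < x → Q' x = 0 → x = ac) :
    (Q ac < 0 → {a : ℝ | 0 < a ∧ Q a = 0}.encard = 2) ∧
      (Q ac = 0 → {a : ℝ | 0 < a ∧ Q a = 0}.encard = 1) ∧
      (0 < Q ac → {a : ℝ | 0 < a ∧ Q a = 0} = ∅) := by
  have hτ' : 0 < τ - 2 := by linarith
  have hcont : Continuous Q := continuous_iff_continuousAt.2 fun x => (hQ' x).continuousAt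
  have hQ0 : Q 0 = 2 := by
    rw [hQ, zero_pow (by omega), Finset.sum_eq_zero]
    · ring
    · intro j hj
      rw [Finset.mem_Icc] at hj
      exact zero_pow (by omega)
  have hrolle : ∀ x y : ℝ, x < y → Q x = Q y → ∃ c ∈ Set.Ioo x y, Q' c = 0 := by
    intro x y hxy h
    exact exists_hasDerivAt_eq_zero hxy hcont.continuousOn h (fun z _ => hQ' z)
  have inj1 : Set.InjOn Q (Set.Icc 0 ac) := by
    intro x hx y hy h
    by_contra hne
    rcases lt_or_gt_of_ne hne with hlt | hlt
    · obtain ⟨c, hc, h0⟩ := hrolle x y hlt h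
      have := huniq c (by linarith [hc.1, hx.1]) h0
      linarith [hc.2, hy.2]
    · obtain ⟨c, hc, h0⟩ := hrolle y x hlt h.symm
      have := huniq c (by linarith [hc.1, hy.1]) h0
      linarith [hc.2, hx.2]
  have inj2 : ∀ b, Set.InjOn Q (Set.Icc ac b) := by
    intro b x hx y hy h
    by_contra hne
    rcases lt_or_gt_of_ne hne with hlt | hlt
    · obtain ⟨c, hc, h0⟩ := hrolle x y hlt h
      have := huniq c (by linarith [hc.1, hx.1]) h0
      linarith [hc.1, hx.1]
    · obtain ⟨c, hc, h0⟩ := hrolle y x hlt h.symm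
      have := huniq c (by linarith [hc.1, hy.1]) h0
      linarith [hc.1, hy.1]
  have hsmall : ∃ a, 0 < a ∧ a ≤ ac ∧ Q a < 2 := by
    obtain ⟨a, ha0, ha⟩ : ∃ a : ℝ, 0 < a ∧ a < min ac (min 1 ((τ - 2) / 2)) :=
      exists_between (lt_min hac (lt_min one_pos (by linarith)))
    rw [lt_min_iff, lt_min_iff] at ha
    obtain ⟨h1, h2, h3⟩ := ha
    refine ⟨a, ha0, h1.le, ?_⟩
    have hs : a ≤ ∑ j ∈ Finset.Icc 1 (k - 1), a ^ j := by
      have := Finset.single_le_sum (f := fun j => a ^ j) (s := Finset.Icc 1 (k - 1))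
        (fun i _ => by positivity) (Finset.mem_Icc.2 ⟨le_refl 1, by omega⟩)
      simpa using this
    have hp : a ^ k ≤ a ^ 2 := pow_le_pow_of_le_one ha0.le h2.le hk
    rw [hQ]
    nlinarith [mul_le_mul_of_nonneg_left hs hτ'.le, mul_pos ha0 (sub_pos.2 h3)]
  have hlarge : ∀ M : ℝ, ∃ b, M ≤ b ∧ 1 ≤ b ∧ M < Q b := by
    intro M
    obtain ⟨b, hb⟩ := exists_ge_ge M (max 1 (((τ - 2) * k + |M|) / 2))
    obtain ⟨hb1, hb2⟩ := hb
    rw [max_le_iff] at hb2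
    obtain ⟨h1, h2⟩ := hb2
    refine ⟨b, hb1, h1, ?_⟩
    have hs : ∑ j ∈ Finset.Icc 1 (k - 1), b ^ j ≤ k * b ^ (k - 1) := by
      have h := Finset.sum_le_card_nsmul (Finset.Icc 1 (k - 1)) (fun j => b ^ j) (b ^ (k - 1))
        (fun j hj => pow_le_pow_right₀ h1 (Finset.mem_Icc.1 hj).2)
      rw [Nat.card_Icc, nsmul_eq_mul] at h
      refine h.trans ?_
      gcongr
      omega
    have hpk : b ^ k = b ^ (k - 1) * b := by
      rw [← pow_succ]
      congr 1
      omega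
    have hge : 1 ≤ b ^ (k - 1) := one_le_pow₀ h1
    have hM := le_abs_self M
    have hM0 := abs_nonneg M
    have h4 : |M| ≤ 2 * b - (τ - 2) * k := by linarith
    rw [hQ, hpk]
    have h5 := mul_le_mul_of_nonneg_left hs hτ'.le
    have h6 : 1 * |M| ≤ b ^ (k - 1) * (2 * b - (τ - 2) * k) :=
      mul_le_mul hge h4 hM0 (by linarith)
    nlinarith
  have anti : StrictAntiOn Q (Set.Icc 0 ac) := by
    rcases ContinuousOn.strictMonoOn_of_injOn_Icc' hac.le hcont.continuousOn inj1 with h | h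
    · exfalso
      obtain ⟨a, h0, h1, h2⟩ := hsmall
      have := h ⟨le_refl _, hac.le⟩ ⟨h0.le, h1⟩ h0
      linarith
    · exact h
  have mono : StrictMonoOn Q (Set.Ici ac) := by
    intro x hx y hy hxy
    obtain ⟨b, h1, _, h2⟩ := hlarge (max y (Q ac))
    have hyb : y ≤ b := (le_max_left _ _).trans h1
    have hQb : Q ac < Q b := (le_max_right _ _).trans_lt h2
    have hx' : ac ≤ x := hx
    have hy' : ac ≤ y := hy
    have hab : ac ≤ b := by linarith
    rcases ContinuousOn.strictMonoOn_of_injOn_Icc' hab hcont.continuousOn (inj2 b) with h | h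
    · exact h ⟨hx', by linarith⟩ ⟨hy', hyb⟩ hxy
    · exfalso
      have := h ⟨le_refl _, hab⟩ ⟨hab, le_refl _⟩ (by linarith)
      linarith
  have hmin : ∀ a, 0 < a → a ≠ ac → Q ac < Q a := by
    intro a ha hne
    rcases lt_or_gt_of_ne hne with h | h
    · exact anti ⟨ha.le, h.le⟩ ⟨hac.le, le_refl _⟩ h
    · exact mono (le_refl ac) h.le h
  refine ⟨?_, ?_, ?_⟩
  · intro hneg
    obtain ⟨u, hu, hu0⟩ : (0 : ℝ) ∈ Q '' Set.Icc 0 ac :=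
      intermediate_value_Icc' hac.le hcont.continuousOn ⟨hneg.le, by rw [hQ0]; norm_num⟩
    obtain ⟨b, hb1, _, hb2⟩ := hlarge (max ac 0)
    have hab : ac ≤ b := (le_max_left _ _).trans hb1
    obtain ⟨v, hv, hv0⟩ : (0 : ℝ) ∈ Q '' Set.Icc ac b :=
      intermediate_value_Icc hab hcont.continuousOn
        ⟨hneg.le, ((le_max_right _ _).trans_lt hb2).le⟩
    have hupos : 0 < u := by
      rcases hu.1.lt_or_eq with h | h
      · exact h
      · rw [← h, hQ0] at hu0
        norm_num at hu0
    have hune : u ≠ ac := by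
      rintro rfl
      linarith
    have hvne : v ≠ ac := by
      rintro rfl
      linarith
    have hvgt : ac < v := lt_of_le_of_ne hv.1 hvne.symm
    rw [Set.encard_eq_two]
    refine ⟨u, v, (lt_of_le_of_lt hu.2 hvgt).ne, ?_⟩
    ext a
    simp only [Set.mem_ofPred_eq, Set.mem_insert_iff, Set.mem_singleton_iff]
    constructor
    · rintro ⟨ha, ha0⟩
      rcases le_total a ac with h | h
      · exact Or.inl (anti.injOn ⟨ha.le, h⟩ hu (by rw [ha0, hu0]))
      · exact Or.inr (mono.injOn h hv.1 (by rw [ha0, hv0]))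
    · rintro (rfl | rfl)
      · exact ⟨hupos, hu0⟩
      · exact ⟨by linarith, hv0⟩
  · intro h0
    rw [Set.encard_eq_one]
    refine ⟨ac, ?_⟩
    ext a
    simp only [Set.mem_ofPred_eq, Set.mem_singleton_iff]
    constructor
    · rintro ⟨ha, ha0⟩
      by_contra hne
      have := hmin a ha hne
      linarith
    · rintro rfl
      exact ⟨hac, h0⟩
  · intro hpos
    ext a
    simp only [Set.mem_ofPred_eq, Set.mem_empty_iff_false, iff_false, not_and]
    intro ha ha0
    by_cases hne : a = ac
    · rw [hne] at ha0
      linarith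
    · have := hmin a ha hne
      linarith
end

section
/- Let k ≥ 2 be an integer and τ > 2 a real number with τ ≠ 2 + 4/(k − 1), let Q(a) = 2·a^k + (2 − τ)·(a^{k−1} + a^{k−2} + ⋯ + a) + 2, and let a_c > 0 be the unique positive root of Q′. If Q(a_c) < 0, then the equation 2·a^{k+1} − τ·a^k + τ·a − 2 = 0 has exactly three roots in (0, ∞); if Q(a_c) = 0, it has exactly two roots in (0, ∞); and if Q(a_c) > 0, its only root in (0, ∞) is a = 1. -/
open scoped BigOperators

theorem aux_sum (n : ℕ) (a : ℝ) : (a - 1) * (∑ j ∈ Finset.Icc 1 n, a ^ j) = a ^ (n + 1) - a := by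
  induction n with
  | zero => simp
  | succ n ih =>
    rw [Finset.sum_Icc_succ_top (by omega), mul_add, ih]
    ring

theorem aux_bound (n : ℕ) (a : ℝ) (ha : 1 ≤ a) : (∑ j ∈ Finset.Icc 1 n, a ^ j) ≤ n * a ^ n := by
  have h := Finset.sum_le_card_nsmul (Finset.Icc 1 n) (fun j => a ^ j) (a ^ n) (by
    intro j hj
    exact pow_le_pow_right₀ ha (Finset.mem_Icc.1 hj).2)
  simpa using h

/-- For `τ > 2`, `τ ≠ 2 + 4/(k − 1)`, with
`Q(a) = 2 a^k + (2 − τ)(a^{k−1} + ⋯ + a) + 2`, `Q′` its derivative and `a_c`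
the unique positive root of `Q′`: if `Q(a_c) < 0` then
`2 a^{k+1} − τ a^k + τ a − 2 = 0` has exactly three positive roots; if
`Q(a_c) = 0`, exactly two; if `Q(a_c) > 0`, its only positive root is `a = 1`. -/
theorem stmt16 (k : ℕ) (hk : 2 ≤ k) (τ : ℝ) (hτ : 2 < τ)
    (hτne : τ ≠ 2 + 4 / ((k : ℝ) - 1)) (Q Q' : ℝ → ℝ)
    (hQ : ∀ a : ℝ, Q a = 2 * a ^ k + (2 - τ) * (∑ j ∈ Finset.Icc 1 (k - 1), a ^ j) + 2)
    (hQ' : ∀ a : ℝ, HasDerivAt Q (Q' a) a)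
    (ac : ℝ) (hac : 0 < ac) (hroot : Q' ac = 0)
    (huniq : ∀ x : ℝ, 0 < x → Q' x = 0 → x = ac) :
    (Q ac < 0 →
      {a : ℝ | 0 < a ∧ 2 * a ^ (k + 1) - τ * a ^ k + τ * a - 2 = 0}.encard = 3) ∧
    (Q ac = 0 →
      {a : ℝ | 0 < a ∧ 2 * a ^ (k + 1) - τ * a ^ k + τ * a - 2 = 0}.encard = 2) ∧
    (0 < Q ac →
      {a : ℝ | 0 < a ∧ 2 * a ^ (k + 1) - τ * a ^ k + τ * a - 2 = 0} = {1}) := by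
  obtain ⟨n, rfl⟩ : ∃ n, k = n + 1 := ⟨k - 1, by omega⟩
  simp only [Nat.add_sub_cancel] at hQ
  have hn : (1 : ℝ) ≤ n := by
    have : 1 ≤ n := by omega
    exact_mod_cast this
  have hfac : ∀ a : ℝ, 2 * a ^ (n + 1 + 1) - τ * a ^ (n + 1) + τ * a - 2 = (a - 1) * Q a := by
    intro a
    rw [hQ]
    have h := aux_sum n a
    linear_combination (-(2 - τ)) * h
  have hQ1 : Q 1 ≠ 0 := by
    intro h
    rw [hQ] at h
    simp at h
    apply hτne
    push_cast
    rw [add_sub_cancel_right]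
    have : (n : ℝ) ≠ 0 := by positivity
    field_simp
    linarith
  have hQ0 : 0 < Q 0 := by
    rw [hQ]
    have : (∑ j ∈ Finset.Icc 1 n, (0 : ℝ) ^ j) = 0 := by
      apply Finset.sum_eq_zero
      intro j hj
      have := (Finset.mem_Icc.1 hj).1
      exact zero_pow (by omega)
    rw [this]
    simp
  have hbig : ∀ B : ℝ, ∃ M, B < M ∧ 0 < Q M := by
    intro B
    refine ⟨max (B + 1) (max 1 ((τ - 2) * n)), lt_of_lt_of_le (by linarith) (le_max_left _ _), ?_⟩
    set M := max (B + 1) (max 1 ((τ - 2) * n)) with hM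
    have h1 : 1 ≤ M := (le_max_left _ _).trans (le_max_right _ _)
    have h2 : (τ - 2) * n ≤ M := (le_max_right _ _).trans (le_max_right _ _)
    have h3 := aux_bound n M h1
    have h4 : 0 ≤ M ^ n := by positivity
    have h5 := mul_le_mul_of_nonneg_right h2 h4
    have h6 := mul_le_mul_of_nonneg_left h3 (by linarith : 0 ≤ τ - 2)
    have h7 : 0 ≤ M ^ n * M := by positivity
    rw [hQ, pow_succ]
    nlinarith
  have hcont : Continuous Q := continuous_iff_continuousAt.2 fun a => (hQ' a).continuousAt
  have hrolle : ∀ x y, 0 ≤ x → x < y → Q x = Q y → x < ac ∧ ac < y := by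
    intro x y hx hxy he
    obtain ⟨c, hc, hc0⟩ := exists_hasDerivAt_eq_zero hxy hcont.continuousOn he (fun z _ => hQ' z)
    have := huniq c (lt_of_le_of_lt hx hc.1) hc0
    subst this
    exact hc
  have hset : {a : ℝ | 0 < a ∧ 2 * a ^ (n + 1 + 1) - τ * a ^ (n + 1) + τ * a - 2 = 0} =
      {a : ℝ | 0 < a ∧ (a = 1 ∨ Q a = 0)} := by
    ext a
    simp only [Set.mem_ofPred_eq, hfac, mul_eq_zero, sub_eq_zero]
  rw [hset]
  refine ⟨fun h => ?_, fun h => ?_, fun h => ?_⟩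
  · obtain ⟨M, hM, hQM⟩ := hbig ac
    obtain ⟨x, hx, hx0⟩ := intermediate_value_Ioo' hac.le hcont.continuousOn (show (0 : ℝ) ∈ Set.Ioo (Q ac) (Q 0) from ⟨h, hQ0⟩)
    obtain ⟨y, hy, hy0⟩ := intermediate_value_Ioo hM.le hcont.continuousOn (show (0 : ℝ) ∈ Set.Ioo (Q ac) (Q M) from ⟨h, hQM⟩)
    have : {a : ℝ | 0 < a ∧ (a = 1 ∨ Q a = 0)} = {1, x, y} := by
      ext a
      simp only [Set.mem_ofPred_eq, Set.mem_insert_iff, Set.mem_singleton_iff]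
      constructor
      · rintro ⟨ha, rfl | ha0⟩
        · exact Or.inl rfl
        · right
          by_contra! hne
          have hax := hrolle a x ha.le
          have hxa := hrolle x a hx.1.le
          have hay := hrolle a y ha.le
          have hya := hrolle y a (hac.trans hy.1).le
          rw [ha0, hx0] at hax hxa
          rw [ha0, hy0] at hay hya
          have := hx.2
          have := hy.1
          rcases lt_or_gt_of_ne hne.1 with h1 | h1
          · linarith [(hax h1 rfl).2]
          · rcases lt_or_gt_of_ne hne.2 with h2 | h2
            · linarith [(hxa h1 rfl).2, (hay h2 rfl).1]
            · linarith [(hya h2 rfl).1]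
      · rintro (rfl | rfl | rfl)
        · exact ⟨one_pos, Or.inl rfl⟩
        · exact ⟨hx.1, Or.inr hx0⟩
        · exact ⟨hac.trans hy.1, Or.inr hy0⟩
    rw [this, Set.encard_eq_three]
    refine ⟨1, x, y, ?_, ?_, ?_, rfl⟩
    · rintro rfl
      exact hQ1 hx0
    · rintro rfl
      exact hQ1 hy0
    · exact (hx.2.trans hy.1).ne
  · have : {a : ℝ | 0 < a ∧ (a = 1 ∨ Q a = 0)} = {1, ac} := by
      ext a
      simp only [Set.mem_ofPred_eq, Set.mem_insert_iff, Set.mem_singleton_iff]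
      constructor
      · rintro ⟨ha, rfl | ha0⟩
        · exact Or.inl rfl
        · right
          by_contra hne
          rcases lt_or_gt_of_ne hne with h1 | h1
          · exact lt_irrefl _ (hrolle a ac ha.le h1 (ha0.trans h.symm)).2
          · exact lt_irrefl _ (hrolle ac a hac.le h1 (h.trans ha0.symm)).1
      · rintro (rfl | rfl)
        · exact ⟨one_pos, Or.inl rfl⟩
        · exact ⟨hac, Or.inr h⟩
    rw [this]
    apply Set.encard_pair
    rintro rfl
    exact hQ1 h
  · ext a
    simp only [Set.mem_ofPred_eq, Set.mem_singleton_iff]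
    constructor
    · rintro ⟨ha, rfl | ha0⟩
      · rfl
      · exfalso
        obtain ⟨M, hM, hQM⟩ := hbig a
        obtain ⟨z, hz, hmin⟩ := isCompact_Icc.exists_isMinOn (Set.nonempty_Icc.2 (ha.trans hM).le)
          (hcont.continuousOn (s := Set.Icc 0 M))
        have hz0 : Q z ≤ 0 := ha0 ▸ hmin (show a ∈ Set.Icc 0 M from ⟨ha.le, hM.le⟩)
        have h1 : 0 < z := lt_of_le_of_ne hz.1 (by
          rintro rfl
          linarith)
        have h2 : z < M := lt_of_le_of_ne hz.2 (by
          rintro rfl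
          linarith)
        have hd := (hmin.isLocalMin (Icc_mem_nhds h1 h2)).hasDerivAt_eq_zero (hQ' z)
        have := huniq z h1 hd
        subst this
        linarith
    · rintro rfl
      exact ⟨one_pos, Or.inl rfl⟩
end

section
/- Let k ≥ 2 be an integer, 0 < θ < 1, τ = θ + θ^{-1}, and let a, b > 0 satisfy the system (a + b − τ)·b^k + τ·b − 2 = 0 and (a + b − τ)·a^k + τ·a − 2 = 0 with a + b ≠ τ. Define u : ℤ → ℝ by u_n = 1 if n is even, u_n = a if n ≡ 3 (mod 4), u_n = b if n ≡ 1 (mod 4). Then Σ_{j∈ℤ} θ^{|j|}·u_j^k = (θ − θ^{-1})/(a + b − τ); in particular, this sum is finite and equals 1 + ((θ + θ^3)·(a^k + b^k) + 2·θ^2 + 2·θ^4)/(1 − θ^4). -/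
open scoped BigOperators

lemma hasSum_four (θ : ℝ) (h0 : 0 < θ) (h1 : θ < 1) (f : ℕ → ℝ) (c0 c1 c2 c3 : ℝ)
    (e0 : ∀ m : ℕ, f (2 * (2 * m)) = c0 * (θ ^ 4) ^ m)
    (e1 : ∀ m : ℕ, f (2 * (2 * m) + 1) = c1 * (θ ^ 4) ^ m)
    (e2 : ∀ m : ℕ, f (2 * (2 * m + 1)) = c2 * (θ ^ 4) ^ m)
    (e3 : ∀ m : ℕ, f (2 * (2 * m + 1) + 1) = c3 * (θ ^ 4) ^ m) :
    HasSum f ((c0 + c2) * (1 - θ ^ 4)⁻¹ + (c1 + c3) * (1 - θ ^ 4)⁻¹) := by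
  have hg : HasSum (fun m : ℕ => (θ ^ 4) ^ m) (1 - θ ^ 4)⁻¹ :=
    hasSum_geometric_of_lt_one (by positivity) (pow_lt_one₀ h0.le h1 (by norm_num))
  rw [add_mul, add_mul]
  apply HasSum.even_add_odd
  · apply HasSum.even_add_odd (f := fun m => f (2 * m))
    · simpa only [e0] using hg.mul_left c0
    · simpa only [e2] using hg.mul_left c2
  · apply HasSum.even_add_odd (f := fun m => f (2 * m + 1))
    · simpa only [e1] using hg.mul_left c1
    · simpa only [e3] using hg.mul_left c3

/-- For `k ≥ 2`, `0 < θ < 1`, `τ = θ + θ⁻¹`, and positive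
`a, b` solving system (ab) with `a + b ≠ τ`, the period-4 sequence `u`
satisfies `Σ_{j∈ℤ} θ^{|j|} u_j^k = (θ − θ⁻¹)/(a + b − τ)`; in particular the
sum is finite and equals
`1 + ((θ + θ^3)(a^k + b^k) + 2θ^2 + 2θ^4)/(1 − θ^4)`. -/
theorem stmt17 (k : ℕ) (hk : 2 ≤ k) (θ : ℝ) (hθ0 : 0 < θ) (hθ1 : θ < 1)
    (τ : ℝ) (hτ : τ = θ + θ⁻¹) (a b : ℝ) (ha : 0 < a) (hb : 0 < b)
    (h1 : (a + b - τ) * b ^ k + τ * b - 2 = 0)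
    (h2 : (a + b - τ) * a ^ k + τ * a - 2 = 0)
    (hne : a + b ≠ τ)
    (u : ℤ → ℝ)
    (hu : ∀ n : ℤ, u n = if n % 2 = 0 then 1 else if n % 4 = 3 then a else b) :
    Summable (fun j : ℤ => θ ^ j.natAbs * u j ^ k) ∧
      (∑' j : ℤ, θ ^ j.natAbs * u j ^ k) = (θ - θ⁻¹) / (a + b - τ) ∧
      (∑' j : ℤ, θ ^ j.natAbs * u j ^ k) =
        1 + ((θ + θ ^ 3) * (a ^ k + b ^ k) + 2 * θ ^ 2 + 2 * θ ^ 4) / (1 - θ ^ 4) := by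
  have hlt : θ ^ 4 < 1 := pow_lt_one₀ hθ0.le hθ1 (by norm_num)
  have hlt2 : θ ^ 2 < 1 := pow_lt_one₀ hθ0.le hθ1 (by norm_num)
  have hE : ∀ n : ℤ, n % 2 = 0 → u n = 1 := fun n hn => by rw [hu, if_pos hn]
  have hA : ∀ n : ℤ, n % 4 = 3 → u n = a := fun n hn => by
    rw [hu, if_neg (by omega), if_pos hn]
  have hB : ∀ n : ℤ, n % 4 = 1 → u n = b := fun n hn => by
    rw [hu, if_neg (by omega), if_neg (by omega)]
  have hp := hasSum_four θ hθ0 hθ1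
    (fun n : ℕ => θ ^ (n : ℤ).natAbs * u (n : ℤ) ^ k) 1 (θ * b ^ k) (θ ^ 2) (θ ^ 3 * a ^ k)
    (fun m => by
      rw [hE _ (by omega), Int.natAbs_natCast]; ring)
    (fun m => by
      rw [hB _ (by omega), Int.natAbs_natCast]; ring)
    (fun m => by
      rw [hE _ (by omega), Int.natAbs_natCast]; ring)
    (fun m => by
      rw [hA _ (by omega), Int.natAbs_natCast]; ring)
  have habs : ∀ n : ℕ, (-((n : ℤ) + 1)).natAbs = n + 1 := fun n => by omega
  have hn := hasSum_four θ hθ0 hθ1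
    (fun n : ℕ => θ ^ (-((n : ℤ) + 1)).natAbs * u (-((n : ℤ) + 1)) ^ k)
    (θ * a ^ k) (θ ^ 2) (θ ^ 3 * b ^ k) (θ ^ 4)
    (fun m => by
      rw [hA _ (by omega), habs]; ring)
    (fun m => by
      rw [hE _ (by omega), habs]; ring)
    (fun m => by
      rw [hB _ (by omega), habs]; ring)
    (fun m => by
      rw [hE _ (by omega), habs]; ring)
  have hs := HasSum.of_nat_of_neg_add_one (f := fun j : ℤ => θ ^ j.natAbs * u j ^ k) hp hn
  have hd : (1 - θ ^ 4) ≠ 0 := by linarith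
  have hd2 : (1 - θ ^ 2) ≠ 0 := by linarith
  have hS : (a + b - τ) ≠ 0 := sub_ne_zero.mpr hne
  have key : 1 + ((θ + θ ^ 3) * (a ^ k + b ^ k) + 2 * θ ^ 2 + 2 * θ ^ 4) / (1 - θ ^ 4)
      = (θ - θ⁻¹) / (a + b - τ) := by
    have hτ' : θ * τ = θ ^ 2 + 1 := by rw [hτ]; field_simp
    have hsum : (a + b - τ) * (a ^ k + b ^ k + τ) = 4 - τ ^ 2 := by linear_combination h1 + h2
    have hleft : 1 + ((θ + θ ^ 3) * (a ^ k + b ^ k) + 2 * θ ^ 2 + 2 * θ ^ 4) / (1 - θ ^ 4)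
        = θ * (a ^ k + b ^ k + τ) / (1 - θ ^ 2) := by
      rw [eq_div_iff hd2, mul_add θ _ τ, hτ']
      field_simp
      ring
    have hright : θ - θ⁻¹ = -(1 - θ ^ 2) / θ := by field_simp; ring
    rw [hleft, hright, div_eq_div_iff hd2 hS, eq_comm, div_mul_eq_mul_div, div_eq_iff hθ0.ne']
    linear_combination (-θ ^ 2) * hsum + (θ * τ + θ ^ 2 + 1) * hτ'
  have hval := hs.tsum_eq
  have h3 : (∑' j : ℤ, θ ^ j.natAbs * u j ^ k) =
      1 + ((θ + θ ^ 3) * (a ^ k + b ^ k) + 2 * θ ^ 2 + 2 * θ ^ 4) / (1 - θ ^ 4) := by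
    rw [hval]
    field_simp
    ring
  exact ⟨hs.summable, h3.trans key, h3⟩
end
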